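/- arXiv:2505.15225 — 3 statements merged into one kernel-verified Lean document; each statement's English description precedes it below -/
import Mathlib

section
/- Let ρ, λ, f : ℝ² → ℝ be infinitely differentiable functions of the variables (x,z). Define the first-order operators (A f)(x,z) = λ_z(x,z) f_x(x,z) − λ_x(x,z) f_z(x,z) and (B f)(x,z) = ρ_x(x,z) f_z(x,z) − ρ_z(x,z) f_x(x,z), and set ς(x,z) = ρ_x(x,z) λ_z(x,z) − ρ_z(x,z) λ_x(x,z). Then for all (x,z) ∈ ℝ², B(A f)(x,z) − A(B f)(x,z) = −(ς_x(x,z) f_z(x,z) − ς_z(x,z) f_x(x,z)). -/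
/-- Partial derivative with respect to the first variable `x`. -/
noncomputable def pX (f : ℝ × ℝ → ℝ) : ℝ × ℝ → ℝ :=
  fun p => deriv (fun x => f (x, p.2)) p.1

/-- Partial derivative with respect to the second variable `z`. -/
noncomputable def pZ (f : ℝ × ℝ → ℝ) : ℝ × ℝ → ℝ :=
  fun p => deriv (fun z => f (p.1, z)) p.2

/-- The operator `A f = λ_z f_x − λ_x f_z`. -/
noncomputable def opA (lam f : ℝ × ℝ → ℝ) : ℝ × ℝ → ℝ :=
  fun p => pZ lam p * pX f p - pX lam p * pZ f p

/-- The operator `B f = ρ_x f_z − ρ_z f_x`. -/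
noncomputable def opB (ρ f : ℝ × ℝ → ℝ) : ℝ × ℝ → ℝ :=
  fun p => pX ρ p * pZ f p - pZ ρ p * pX f p

/-- The weighted vorticity `ς = ρ_x λ_z − ρ_z λ_x`. -/
noncomputable def varsigma (ρ lam : ℝ × ℝ → ℝ) : ℝ × ℝ → ℝ :=
  fun p => pX ρ p * pZ lam p - pZ ρ p * pX lam p

/-! Both operators are Poisson brackets: with `{g, h} = g_x h_z − g_z h_x` one has `B f = {ρ, f}`,
`A f = {f, λ}` and `ς = {ρ, λ}`, so the commutator identity is the Jacobi identity
`{ρ, {f, λ}} = {{ρ, f}, λ} + {f, {ρ, λ}}`. The Jacobi identity holds for the bracket attached to any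
constant bivector `u ∧ v`, because second derivatives are symmetric. -/

section SecondDerivative

variable {𝕜 E F : Type*} [NontriviallyNormedField 𝕜] [NormedAddCommGroup E] [NormedSpace 𝕜 E]
  [NormedAddCommGroup F] [NormedSpace 𝕜 F] {f : E → F} {x : E}

theorem differentiableAt_fderiv_of_contDiffAt {n : WithTop ℕ∞} (hn : 2 ≤ n)
    (hf : ContDiffAt 𝕜 n f x) : DifferentiableAt 𝕜 (fderiv 𝕜 f) x :=
  (hf.fderiv_right (m := 1) hn).differentiableAt one_ne_zero

theorem hasFDerivAt_fderiv_apply (hf : DifferentiableAt 𝕜 (fderiv 𝕜 f) x) (u : E) :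
    HasFDerivAt (fun y => fderiv 𝕜 f y u) ((fderiv 𝕜 (fderiv 𝕜 f) x).flip u) x := by
  simpa using hf.hasFDerivAt.clm_apply (hasFDerivAt_const u x)

end SecondDerivative

section BivectorBracket

variable (𝕜 : Type*) {E 𝔸 : Type*} [NontriviallyNormedField 𝕜] [NormedAddCommGroup E]
  [NormedSpace 𝕜 E] [NormedCommRing 𝔸] [NormedAlgebra 𝕜 𝔸]

/-- The Poisson bracket `{f, g} = ∂ᵤf ∂ᵥg − ∂ᵥf ∂ᵤg` of the constant bivector `u ∧ v`; on the plane,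
`u = (1, 0)` and `v = (0, 1)` give the canonical bracket. It is written with Fréchet derivatives,
which take the junk value `0` where `f` or `g` is only directionally differentiable. -/
noncomputable def bivectorBracket (u v : E) (f g : E → 𝔸) : E → 𝔸 :=
  fun x => fderiv 𝕜 f x u * fderiv 𝕜 g x v - fderiv 𝕜 f x v * fderiv 𝕜 g x u

variable {𝕜} {f g h : E → 𝔸} {x : E}

theorem differentiableAt_bivectorBracket (hf : DifferentiableAt 𝕜 (fderiv 𝕜 f) x)
    (hg : DifferentiableAt 𝕜 (fderiv 𝕜 g) x) (u v : E) :
    DifferentiableAt 𝕜 (bivectorBracket 𝕜 u v f g) x := by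
  unfold bivectorBracket
  fun_prop

theorem fderiv_bivectorBracket_apply (hf : DifferentiableAt 𝕜 (fderiv 𝕜 f) x)
    (hg : DifferentiableAt 𝕜 (fderiv 𝕜 g) x) (u v w : E) :
    fderiv 𝕜 (bivectorBracket 𝕜 u v f g) x w =
      (fderiv 𝕜 (fderiv 𝕜 f) x w u * fderiv 𝕜 g x v +
          fderiv 𝕜 f x u * fderiv 𝕜 (fderiv 𝕜 g) x w v) -
        (fderiv 𝕜 (fderiv 𝕜 f) x w v * fderiv 𝕜 g x u +
          fderiv 𝕜 f x v * fderiv 𝕜 (fderiv 𝕜 g) x w u) := by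
  have hfg : HasFDerivAt (bivectorBracket 𝕜 u v f g) _ x :=
    ((hasFDerivAt_fderiv_apply hf u).mul (hasFDerivAt_fderiv_apply hg v)).sub
      ((hasFDerivAt_fderiv_apply hf v).mul (hasFDerivAt_fderiv_apply hg u))
  simp only [hfg.fderiv, sub_apply, add_apply, smul_apply, ContinuousLinearMap.flip_apply,
    smul_eq_mul]
  ring

theorem bivectorBracket_leibniz {n : WithTop ℕ∞} (hn : minSmoothness 𝕜 2 ≤ n)
    (hf : ContDiffAt 𝕜 n f x) (hg : ContDiffAt 𝕜 n g x) (hh : ContDiffAt 𝕜 n h x) (u v : E) :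
    bivectorBracket 𝕜 u v f (bivectorBracket 𝕜 u v g h) x =
      bivectorBracket 𝕜 u v (bivectorBracket 𝕜 u v f g) h x +
        bivectorBracket 𝕜 u v g (bivectorBracket 𝕜 u v f h) x := by
  have hn' : 2 ≤ n := le_minSmoothness.trans hn
  have hf' := differentiableAt_fderiv_of_contDiffAt hn' hf
  have hg' := differentiableAt_fderiv_of_contDiffAt hn' hg
  have hh' := differentiableAt_fderiv_of_contDiffAt hn' hh
  rw [bivectorBracket, bivectorBracket, bivectorBracket]
  simp only [fderiv_bivectorBracket_apply hf' hg', fderiv_bivectorBracket_apply hf' hh',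
    fderiv_bivectorBracket_apply hg' hh', (hf.isSymmSndFDerivAt hn).eq v u,
    (hg.isSymmSndFDerivAt hn).eq v u, (hh.isSymmSndFDerivAt hn).eq v u]
  ring

end BivectorBracket

section Plane

variable {f g h : ℝ × ℝ → ℝ} {p : ℝ × ℝ}

theorem pX_eq_fderiv (hf : DifferentiableAt ℝ f p) : pX f p = fderiv ℝ f p (1, 0) :=
  (hf.hasFDerivAt.comp_hasDerivAt p.1
    ((hasDerivAt_id p.1).prodMk (hasDerivAt_const p.1 p.2))).deriv

theorem pZ_eq_fderiv (hf : DifferentiableAt ℝ f p) : pZ f p = fderiv ℝ f p (0, 1) :=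
  (hf.hasFDerivAt.comp_hasDerivAt p.2
    ((hasDerivAt_const p.2 p.1).prodMk (hasDerivAt_id p.2))).deriv

theorem varsigma_eq_bivectorBracket (hf : Differentiable ℝ f) (hg : Differentiable ℝ g) :
    varsigma f g = bivectorBracket ℝ (1, 0) (0, 1) f g := by
  funext p
  simp only [varsigma, bivectorBracket, pX_eq_fderiv (hf p), pX_eq_fderiv (hg p),
    pZ_eq_fderiv (hf p), pZ_eq_fderiv (hg p)]

theorem differentiable_varsigma (hf : ContDiff ℝ 2 f) (hg : ContDiff ℝ 2 g) :
    Differentiable ℝ (varsigma f g) := by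
  rw [varsigma_eq_bivectorBracket (hf.differentiable two_ne_zero) (hg.differentiable two_ne_zero)]
  exact fun p => differentiableAt_bivectorBracket
    (differentiableAt_fderiv_of_contDiffAt le_rfl hf.contDiffAt)
    (differentiableAt_fderiv_of_contDiffAt le_rfl hg.contDiffAt) _ _

theorem varsigma_leibniz (hf : ContDiff ℝ 2 f) (hg : ContDiff ℝ 2 g) (hh : ContDiff ℝ 2 h) :
    varsigma f (varsigma g h) = varsigma (varsigma f g) h + varsigma g (varsigma f h) := by
  have hf' := hf.differentiable two_ne_zero
  have hg' := hg.differentiable two_ne_zero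
  have hh' := hh.differentiable two_ne_zero
  rw [varsigma_eq_bivectorBracket hf' (differentiable_varsigma hg hh),
    varsigma_eq_bivectorBracket (differentiable_varsigma hf hg) hh',
    varsigma_eq_bivectorBracket hg' (differentiable_varsigma hf hh),
    varsigma_eq_bivectorBracket hf' hg', varsigma_eq_bivectorBracket hf' hh',
    varsigma_eq_bivectorBracket hg' hh']
  funext p
  exact bivectorBracket_leibniz minSmoothness_of_isRCLikeNormedField.le
    hf.contDiffAt hg.contDiffAt hh.contDiffAt _ _

theorem varsigma_antisymm (f g : ℝ × ℝ → ℝ) : varsigma f g = -varsigma g f := by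
  funext p
  simp only [varsigma, Pi.neg_apply]
  ring

theorem opB_eq_varsigma (ρ f : ℝ × ℝ → ℝ) : opB ρ f = varsigma ρ f := rfl

theorem opA_eq_varsigma (lam f : ℝ × ℝ → ℝ) : opA lam f = varsigma f lam := by
  funext p
  simp only [opA, varsigma]
  ring

end Plane

theorem clebsch_benjamin_commutator_general {ρ lam f : ℝ × ℝ → ℝ}
    (hρ : ContDiff ℝ 2 ρ) (hlam : ContDiff ℝ 2 lam) (hf : ContDiff ℝ 2 f) :
    opB ρ (opA lam f) - opA lam (opB ρ f) = -varsigma (varsigma ρ lam) f := by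
  simp only [opA_eq_varsigma, opB_eq_varsigma]
  rw [varsigma_leibniz hρ hf hlam, add_sub_cancel_left, varsigma_antisymm]

/-- The commutator identity behind the coincidence of the pushed-forward Zakharov
canonical Poisson tensor in Clebsch variables with Benjamin's Lie-Poisson tensor. -/
theorem clebsch_benjamin_commutator
    (ρ lam f : ℝ × ℝ → ℝ)
    (hρ : ContDiff ℝ (⊤ : ℕ∞) ρ) (hlam : ContDiff ℝ (⊤ : ℕ∞) lam) (hf : ContDiff ℝ (⊤ : ℕ∞) f) :
    ∀ p : ℝ × ℝ,
      opB ρ (opA lam f) p - opA lam (opB ρ f) p =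
        -(pX (varsigma ρ lam) p * pZ f p - pZ (varsigma ρ lam) p * pX f p) := by
  have two_le : (2 : WithTop ℕ∞) ≤ (⊤ : ℕ∞) := WithTop.coe_le_coe.2 le_top
  exact congrFun (clebsch_benjamin_commutator_general (hρ.of_le two_le) (hlam.of_le two_le)
    (hf.of_le two_le))
end

section
/- Let η, ū : ℝ² → ℝ be infinitely differentiable functions of (x,t) with η(x,t) > 0 for all (x,t), and assume the mass conservation equation η_t + (η ū)_x = 0 holds identically. Define v = (η³ ū_x)_x / (3η). Then pointwise on ℝ²: v_t + ū v_x + v ū_x + (1/2)(η² ū_x²)_x = (1/(3η)) ( η³ ( ū_{tx} + ū ū_{xx} − ū_x² ) )_x. -/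
/-- Partial derivative in the spatial variable `x` (first argument). -/
noncomputable def dX (f : ℝ → ℝ → ℝ) : ℝ → ℝ → ℝ :=
  fun x t => deriv (fun x' => f x' t) x

/-- Partial derivative in time `t` (second argument). -/
noncomputable def dT (f : ℝ → ℝ → ℝ) : ℝ → ℝ → ℝ :=
  fun x t => deriv (fun t' => f x t') t

/-!
Write `D = ∂_t + u ∂_x` for the material derivative and `a = u_x`. Mass conservation says
`D η = -η a`, so `D (η ^ n f) = η ^ n (D f - n a f)`, while `D` and `∂_x` commute up to `-a ∂_x`.
Applying `D` to `3 η v = (η³ a)_x`, the two corrections `-3 η a v` and `-a (η³ a)_x` cancel, which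
leaves `3 η D v = (η³ (D a - 3 a²))_x`. The remaining terms match because
`a (η³ a)_x + (3/2) η (η² a²)_x = 2 (η³ a²)_x`.
-/

open Function

section PartialDerivatives

variable {f g h : ℝ → ℝ → ℝ} {x t : ℝ}

lemma hasDerivAt_fderiv_fst (hf : DifferentiableAt ℝ (uncurry f) (x, t)) :
    HasDerivAt (fun x' => f x' t) (fderiv ℝ (uncurry f) (x, t) (1, 0)) x :=
  hf.hasFDerivAt.comp_hasDerivAt (l := uncurry f) x
    ((hasDerivAt_id' x).prodMk (hasDerivAt_const x t))

lemma hasDerivAt_fderiv_snd (hf : DifferentiableAt ℝ (uncurry f) (x, t)) :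
    HasDerivAt (fun t' => f x t') (fderiv ℝ (uncurry f) (x, t) (0, 1)) t :=
  hf.hasFDerivAt.comp_hasDerivAt t ((hasDerivAt_const t x).prodMk (hasDerivAt_id' t))

lemma dX_eq_fderiv (hf : DifferentiableAt ℝ (uncurry f) (x, t)) :
    dX f x t = fderiv ℝ (uncurry f) (x, t) (1, 0) :=
  (hasDerivAt_fderiv_fst hf).deriv

lemma dT_eq_fderiv (hf : DifferentiableAt ℝ (uncurry f) (x, t)) :
    dT f x t = fderiv ℝ (uncurry f) (x, t) (0, 1) :=
  (hasDerivAt_fderiv_snd hf).deriv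

lemma hasDerivAt_dX (hf : DifferentiableAt ℝ (uncurry f) (x, t)) :
    HasDerivAt (fun x' => f x' t) (dX f x t) x :=
  (hasDerivAt_fderiv_fst hf).differentiableAt.hasDerivAt

lemma hasDerivAt_dT (hf : DifferentiableAt ℝ (uncurry f) (x, t)) :
    HasDerivAt (fun t' => f x t') (dT f x t) t :=
  (hasDerivAt_fderiv_snd hf).differentiableAt.hasDerivAt

lemma dX_add (hf : DifferentiableAt ℝ (uncurry f) (x, t))
    (hg : DifferentiableAt ℝ (uncurry g) (x, t)) :
    dX (fun x t => f x t + g x t) x t = dX f x t + dX g x t :=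
  ((hasDerivAt_dX hf).add (hasDerivAt_dX hg)).deriv

lemma dX_mul (hf : DifferentiableAt ℝ (uncurry f) (x, t))
    (hg : DifferentiableAt ℝ (uncurry g) (x, t)) :
    dX (fun x t => f x t * g x t) x t = dX f x t * g x t + f x t * dX g x t :=
  ((hasDerivAt_dX hf).mul (hasDerivAt_dX hg)).deriv

lemma dT_mul (hf : DifferentiableAt ℝ (uncurry f) (x, t))
    (hg : DifferentiableAt ℝ (uncurry g) (x, t)) :
    dT (fun x t => f x t * g x t) x t = dT f x t * g x t + f x t * dT g x t :=
  ((hasDerivAt_dT hf).mul (hasDerivAt_dT hg)).deriv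

lemma dX_pow (hf : DifferentiableAt ℝ (uncurry f) (x, t)) (n : ℕ) :
    dX (fun x t => f x t ^ n) x t = n * f x t ^ (n - 1) * dX f x t :=
  ((hasDerivAt_dX hf).pow n).deriv

lemma dT_pow (hf : DifferentiableAt ℝ (uncurry f) (x, t)) (n : ℕ) :
    dT (fun x t => f x t ^ n) x t = n * f x t ^ (n - 1) * dT f x t :=
  ((hasDerivAt_dT hf).pow n).deriv

lemma dX_const_mul (c : ℝ) (f : ℝ → ℝ → ℝ) (x t : ℝ) :
    dX (fun x t => c * f x t) x t = c * dX f x t :=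
  deriv_const_mul_field c

lemma dT_const_mul (c : ℝ) (f : ℝ → ℝ → ℝ) (x t : ℝ) :
    dT (fun x t => c * f x t) x t = c * dT f x t :=
  deriv_const_mul_field c

lemma uncurry_dX_eq_fderiv (hf : Differentiable ℝ (uncurry f)) :
    uncurry (dX f) = fun p => fderiv ℝ (uncurry f) p (1, 0) :=
  funext fun p => dX_eq_fderiv (hf p)

lemma uncurry_dT_eq_fderiv (hf : Differentiable ℝ (uncurry f)) :
    uncurry (dT f) = fun p => fderiv ℝ (uncurry f) p (0, 1) :=
  funext fun p => dT_eq_fderiv (hf p)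

lemma contDiff_dX {m n : WithTop ℕ∞} (hf : ContDiff ℝ n (uncurry f)) (hmn : m + 1 ≤ n) :
    ContDiff ℝ m (uncurry (dX f)) := by
  rw [uncurry_dX_eq_fderiv ((hf.of_le (le_add_self.trans hmn)).differentiable one_ne_zero)]
  exact (hf.fderiv_right hmn).clm_apply contDiff_const

lemma contDiff_dT {m n : WithTop ℕ∞} (hf : ContDiff ℝ n (uncurry f)) (hmn : m + 1 ≤ n) :
    ContDiff ℝ m (uncurry (dT f)) := by
  rw [uncurry_dT_eq_fderiv ((hf.of_le (le_add_self.trans hmn)).differentiable one_ne_zero)]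
  exact (hf.fderiv_right hmn).clm_apply contDiff_const

lemma dT_dX_comm (hf : ContDiff ℝ 2 (uncurry f)) (x t : ℝ) :
    dT (dX f) x t = dX (dT f) x t := by
  have hdiff : Differentiable ℝ (uncurry f) := hf.differentiable two_ne_zero
  have hdiff' : DifferentiableAt ℝ (fderiv ℝ (uncurry f)) (x, t) :=
    (hf.fderiv_right (m := 1) (by norm_num)).differentiable one_ne_zero _
  have hsymm : IsSymmSndFDerivAt ℝ (uncurry f) (x, t) :=
    hf.contDiffAt.isSymmSndFDerivAt (by simp)
  have hX := (contDiff_dX (m := 1) hf (by norm_num)).differentiable one_ne_zero (x, t)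
  have hT := (contDiff_dT (m := 1) hf (by norm_num)).differentiable one_ne_zero (x, t)
  rw [dT_eq_fderiv hX, dX_eq_fderiv hT, uncurry_dX_eq_fderiv hdiff, uncurry_dT_eq_fderiv hdiff,
    fderiv_clm_apply hdiff' (by fun_prop), fderiv_clm_apply hdiff' (by fun_prop)]
  simpa using hsymm.eq (0, 1) (1, 0)

lemma two_mul_dX_cube_mul_sq (hf : DifferentiableAt ℝ (uncurry f) (x, t))
    (hg : DifferentiableAt ℝ (uncurry g) (x, t)) :
    2 * dX (fun x t => f x t ^ 3 * g x t ^ 2) x t =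
      g x t * dX (fun x t => f x t ^ 3 * g x t) x t
        + 3 / 2 * f x t * dX (fun x t => f x t ^ 2 * g x t ^ 2) x t := by
  have hfpow (n : ℕ) : DifferentiableAt ℝ (uncurry fun x t => f x t ^ n) (x, t) := hf.pow n
  have hgsq : DifferentiableAt ℝ (uncurry fun x t => g x t ^ 2) (x, t) := hg.pow 2
  rw [dX_mul (hfpow 3) hgsq, dX_mul (hfpow 3) hg, dX_mul (hfpow 2) hgsq,
    dX_pow hf, dX_pow hf, dX_pow hg]
  push_cast
  ring

lemma dX_cube_mul_sub_sq (hf : DifferentiableAt ℝ (uncurry f) (x, t))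
    (hg : DifferentiableAt ℝ (uncurry g) (x, t)) (hh : DifferentiableAt ℝ (uncurry h) (x, t)) :
    dX (fun x t => f x t ^ 3 * (h x t - g x t ^ 2)) x t =
      dX (fun x t => f x t ^ 3 * (h x t - 3 * g x t ^ 2)) x t
        + g x t * dX (fun x t => f x t ^ 3 * g x t) x t
        + 3 / 2 * f x t * dX (fun x t => f x t ^ 2 * g x t ^ 2) x t := by
  have hsub : DifferentiableAt ℝ (uncurry fun x t => f x t ^ 3 * (h x t - 3 * g x t ^ 2)) (x, t) :=
    (hf.pow 3).mul (hh.sub ((hg.pow 2).const_mul 3))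
  have hsq : DifferentiableAt ℝ (uncurry fun x t => 2 * (f x t ^ 3 * g x t ^ 2)) (x, t) :=
    ((hf.pow 3).mul (hg.pow 2)).const_mul 2
  calc dX (fun x t => f x t ^ 3 * (h x t - g x t ^ 2)) x t
      = dX (fun x t => f x t ^ 3 * (h x t - 3 * g x t ^ 2)
          + 2 * (f x t ^ 3 * g x t ^ 2)) x t := by
        congr 1
        ext x t
        ring
    _ = _ := by
        rw [dX_add hsub hsq, dX_const_mul, two_mul_dX_cube_mul_sq hf hg, add_assoc]

end PartialDerivatives

/-- The material derivative `f_t + u f_x` of `f` along the velocity field `u`. -/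
noncomputable def materialDeriv (u f : ℝ → ℝ → ℝ) : ℝ → ℝ → ℝ :=
  fun x t => dT f x t + u x t * dX f x t

section MaterialDerivative

variable {η u f g w : ℝ → ℝ → ℝ} {x t : ℝ}

lemma contDiff_materialDeriv {m n : WithTop ℕ∞} (hu : ContDiff ℝ m (uncurry u))
    (hf : ContDiff ℝ n (uncurry f)) (hmn : m + 1 ≤ n) :
    ContDiff ℝ m (uncurry (materialDeriv u f)) :=
  (contDiff_dT hf hmn).add (hu.mul (contDiff_dX hf hmn))

lemma materialDeriv_const_mul (c : ℝ) (u f : ℝ → ℝ → ℝ) (x t : ℝ) :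
    materialDeriv u (fun x t => c * f x t) x t = c * materialDeriv u f x t := by
  simp only [materialDeriv, dX_const_mul, dT_const_mul]
  ring

lemma materialDeriv_mul (hf : DifferentiableAt ℝ (uncurry f) (x, t))
    (hg : DifferentiableAt ℝ (uncurry g) (x, t)) :
    materialDeriv u (fun x t => f x t * g x t) x t =
      materialDeriv u f x t * g x t + f x t * materialDeriv u g x t := by
  simp only [materialDeriv, dX_mul hf hg, dT_mul hf hg]
  ring

lemma materialDeriv_pow (hf : DifferentiableAt ℝ (uncurry f) (x, t)) (n : ℕ) :
    materialDeriv u (fun x t => f x t ^ n) x t =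
      n * f x t ^ (n - 1) * materialDeriv u f x t := by
  simp only [materialDeriv, dX_pow hf, dT_pow hf]
  ring

lemma materialDeriv_dX (hu : DifferentiableAt ℝ (uncurry u) (x, t))
    (hf : ContDiff ℝ 2 (uncurry f)) :
    materialDeriv u (dX f) x t = dX (materialDeriv u f) x t - dX u x t * dX f x t := by
  have hX := (contDiff_dX (m := 1) hf (by norm_num)).differentiable one_ne_zero (x, t)
  have hT := (contDiff_dT (m := 1) hf (by norm_num)).differentiable one_ne_zero (x, t)
  have huX : DifferentiableAt ℝ (uncurry fun x t => u x t * dX f x t) (x, t) := hu.mul hX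
  have hexpand : dX (materialDeriv u f) x t =
      dX (dT f) x t + (dX u x t * dX f x t + u x t * dX (dX f) x t) :=
    (dX_add hT huX).trans (congrArg _ (dX_mul hu hX))
  rw [hexpand, materialDeriv, dT_dX_comm hf]
  ring

lemma materialDeriv_eq_of_mass_conservation (hη : DifferentiableAt ℝ (uncurry η) (x, t))
    (hu : DifferentiableAt ℝ (uncurry u) (x, t))
    (hmass : dT η x t + dX (fun x t => η x t * u x t) x t = 0) :
    materialDeriv u η x t = -(η x t * dX u x t) := by
  rw [dX_mul hη hu] at hmass
  rw [materialDeriv]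
  linear_combination hmass

lemma materialDeriv_pow_mul_of_mass_conservation (hη : DifferentiableAt ℝ (uncurry η) (x, t))
    (hf : DifferentiableAt ℝ (uncurry f) (x, t))
    (hmass : materialDeriv u η x t = -(η x t * dX u x t)) (n : ℕ) :
    materialDeriv u (fun x t => η x t ^ n * f x t) x t =
      η x t ^ n * (materialDeriv u f x t - n * dX u x t * f x t) := by
  have hηpow : DifferentiableAt ℝ (uncurry fun x t => η x t ^ n) (x, t) := hη.pow n
  rw [materialDeriv_mul hηpow hf, materialDeriv_pow hη, hmass]
  cases n with
  | zero => simp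
  | succ n =>
    rw [Nat.add_sub_cancel]
    ring

lemma mul_materialDeriv_eq_dX_of_mass_conservation {c : ℝ} (hη : ContDiff ℝ 2 (uncurry η))
    (hu : DifferentiableAt ℝ (uncurry u) (x, t)) (hf : ContDiff ℝ 2 (uncurry f))
    (hw : DifferentiableAt ℝ (uncurry w) (x, t))
    (hmass : ∀ x t, materialDeriv u η x t = -(η x t * dX u x t)) (n : ℕ)
    (hηw : ∀ x t, c * (η x t * w x t) = dX (fun x t => η x t ^ n * f x t) x t) :
    c * (η x t * materialDeriv u w x t) =
      dX (fun x t => η x t ^ n * (materialDeriv u f x t - n * dX u x t * f x t)) x t := by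
  have hη' := hη.differentiable two_ne_zero
  have hf' := hf.differentiable two_ne_zero
  have hflux : materialDeriv u (fun x t => η x t ^ n * f x t) =
      fun x t => η x t ^ n * (materialDeriv u f x t - n * dX u x t * f x t) :=
    funext₂ fun x t =>
      materialDeriv_pow_mul_of_mass_conservation (hη' (x, t)) (hf' (x, t)) (hmass x t) n
  have hdensity : (fun x t => c * (η x t * w x t)) = dX (fun x t => η x t ^ n * f x t) :=
    funext₂ hηw
  have hsmooth : ContDiff ℝ 2 (uncurry fun x t => η x t ^ n * f x t) := (hη.pow n).mul hf
  have hcomm := materialDeriv_dX hu hsmooth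
  rw [hflux, ← hdensity, materialDeriv_const_mul, materialDeriv_mul (hη' _) hw, hmass] at hcomm
  linear_combination hcomm

end MaterialDerivative

theorem SGN_dispersive_term_identity_general
    (η u : ℝ → ℝ → ℝ)
    (hη : ContDiff ℝ 2 (uncurry η))
    (hu : ContDiff ℝ 3 (uncurry u))
    (hη0 : ∀ x t, η x t ≠ 0)
    (hmass : ∀ x t, dT η x t + dX (fun x' t' => η x' t' * u x' t') x t = 0)
    (v : ℝ → ℝ → ℝ)
    (hv : v = fun x t => dX (fun x' t' => η x' t' ^ 3 * dX u x' t') x t / (3 * η x t))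
    (x t : ℝ) :
    dT v x t + u x t * dX v x t + v x t * dX u x t
        + 1 / 2 * dX (fun x' t' => η x' t' ^ 2 * dX u x' t' ^ 2) x t =
      1 / (3 * η x t) *
        dX (fun x' t' => η x' t' ^ 3 *
          (dT (dX u) x' t' + u x' t' * dX (dX u) x' t' - dX u x' t' ^ 2)) x t := by
  have h3η (x t : ℝ) : 3 * η x t ≠ 0 := mul_ne_zero three_ne_zero (hη0 x t)
  have hη1 := hη.differentiable two_ne_zero
  have hu1 := hu.differentiable three_ne_zero
  have hux : ContDiff ℝ 2 (uncurry (dX u)) := contDiff_dX hu (by norm_num)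
  have hDux : ContDiff ℝ 1 (uncurry (materialDeriv u (dX u))) :=
    contDiff_materialDeriv (hu.of_le (by norm_num)) hux (by norm_num)
  have hflux : ContDiff ℝ 1 (uncurry (dX fun x t => η x t ^ 3 * dX u x t)) :=
    contDiff_dX (n := 2) ((hη.pow 3).mul hux) (by norm_num)
  have hv1 : Differentiable ℝ (uncurry v) := by
    rw [hv]
    exact (hflux.div (contDiff_const.mul (hη.of_le one_le_two))
      fun p => h3η p.1 p.2).differentiable one_ne_zero
  have hηv (x t : ℝ) : 3 * (η x t * v x t) = dX (fun x t => η x t ^ 3 * dX u x t) x t := by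
    rw [← mul_assoc, hv, mul_div_cancel₀ _ (h3η x t)]
  have hDη (x t : ℝ) : materialDeriv u η x t = -(η x t * dX u x t) :=
    materialDeriv_eq_of_mass_conservation (hη1 _) (hu1 _) (hmass x t)
  have hDv : 3 * (η x t * materialDeriv u v x t) =
      dX (fun x t => η x t ^ 3 * (materialDeriv u (dX u) x t - 3 * dX u x t ^ 2)) x t := by
    simpa only [Nat.cast_ofNat, mul_assoc, ← sq] using
      mul_materialDeriv_eq_dX_of_mass_conservation hη (hu1 (x, t)) hux (hv1 _) hDη 3 hηv
  have hdX := dX_cube_mul_sub_sq (hη1 (x, t)) (hux.differentiable two_ne_zero _)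
    (hDux.differentiable one_ne_zero _)
  rw [← hDv, ← hηv] at hdX
  rw [one_div_mul_eq_div (3 * η x t), eq_div_iff (h3η x t)]
  refine Eq.trans ?_ hdX.symm
  rw [materialDeriv]
  ring

/-- The core Appendix-A computation in the equivalence of the canonical Hamiltonian
system with the Serre–Green–Naghdi equations: the evolution of
`v = (η³ ū_x)_x/(3η)` reproduces exactly the SGN dispersive term. -/
theorem SGN_dispersive_term_identity
    (η u : ℝ → ℝ → ℝ)
    (hη : ContDiff ℝ (⊤ : ℕ∞) (fun p : ℝ × ℝ => η p.1 p.2))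
    (hu : ContDiff ℝ (⊤ : ℕ∞) (fun p : ℝ × ℝ => u p.1 p.2))
    (hηpos : ∀ x t, 0 < η x t)
    (hmass : ∀ x t, dT η x t + dX (fun x' t' => η x' t' * u x' t') x t = 0)
    (v : ℝ → ℝ → ℝ)
    (hv : v = fun x t => dX (fun x' t' => (η x' t')^3 * dX u x' t') x t / (3 * η x t)) :
    ∀ x t,
      dT v x t + u x t * dX v x t + v x t * dX u x t
        + (1/2) * dX (fun x' t' => (η x' t')^2 * (dX u x' t')^2) x t
      = (1/(3 * η x t)) *
          dX (fun x' t' => (η x' t')^3 *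
            (dT (dX u) x' t' + u x' t' * dX (dX u) x' t' - (dX u x' t')^2)) x t := by
  exact SGN_dispersive_term_identity_general η u (contDiff_infty.1 hη 2) (contDiff_infty.1 hu 3)
    (fun x t => (hηpos x t).ne') hmass v hv
end

section
/- Let ρ ≠ 0 and ε be real constants, let ū : ℝ → ℝ be infinitely differentiable with compact support, and let η : ℝ → ℝ be infinitely differentiable with η(x) > 0 for all x. Define v = (η³ ū')' / (3η) and μ_ε = ρ( ū − ε² v ). Then ∫_ℝ (1/ρ)( η μ_ε² − (ε²/3) η³ (μ_ε')² ) dx = ∫_ℝ ρ ( η ū² + (ε²/3) η³ (ū')² ) dx + ε⁴ ∫_ℝ ρ ( η v² + (2/3) η³ ū' v' ) dx − (ε⁶/3) ∫_ℝ ρ η³ (v')² dx. -/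
/-!
Put `δ = ε²`, `a = 3 η` and `b = η³`, so that `a v = (b u')'`. Up to the factor `ρ / 3`, the
canonical density is `a (u - δ v)² - δ b (u' - δ v')²`, whose coefficient of `δ` is
`-2 a u v - b u'²`. Integrating `u (b u')'` by parts turns `-∫ a u v` into `∫ b u'²`, so this
coefficient integrates to `∫ b u'²`: the sign of the gradient term is flipped, which is the
passage from the canonical energy to the Serre–Green–Naghdi energy.
-/

open MeasureTheory

section Integrability

variable {X : Type*} [TopologicalSpace X] [MeasurableSpace X] [OpensMeasurableSpace X]
  {m : Measure X} [IsFiniteMeasureOnCompacts m] {c f g : X → ℝ}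

theorem integrable_mul_mul_of_hasCompactSupport (hc : Continuous c) (hf : Continuous f)
    (hg : Continuous g) (hg_supp : HasCompactSupport g) :
    Integrable (fun x => c x * (f x * g x)) m :=
  (hc.mul (hf.mul hg)).integrable_of_hasCompactSupport hg_supp.mul_left.mul_left

theorem integrable_mul_sq_of_hasCompactSupport (hc : Continuous c) (hf : Continuous f)
    (hf_supp : HasCompactSupport f) : Integrable (fun x => c x * f x ^ 2) m := by
  simpa only [pow_two] using integrable_mul_mul_of_hasCompactSupport hc hf hf hf_supp

end Integrability

section WeightedEnergy

variable {a b f u v : ℝ → ℝ}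

theorem integral_mul_deriv_sq_eq_neg_integral_mul (hb : Continuous b) (hf : Continuous f)
    (hu : ContDiff ℝ 1 u) (hu_supp : HasCompactSupport u)
    (hflux : ∀ x, HasDerivAt (fun y => b y * deriv u y) (f x) x) :
    ∫ x, b x * deriv u x ^ 2 = -∫ x, f x * u x := by
  have hu' : Continuous (deriv u) := hu.continuous_deriv_one
  have by_parts : ∫ x, b x * deriv u x * deriv u x = -∫ x, f x * u x :=
    integral_mul_deriv_eq_deriv_mul_of_integrable (fun x _ => hflux x)
      (fun x _ => (hu.differentiable one_ne_zero x).hasDerivAt)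
      (((hb.mul hu').mul hu').integrable_of_hasCompactSupport hu_supp.deriv.mul_left)
      ((hf.mul hu.continuous).integrable_of_hasCompactSupport hu_supp.mul_left)
      (((hb.mul hu').mul hu.continuous).integrable_of_hasCompactSupport hu_supp.mul_left)
  simpa only [pow_two, mul_assoc] using by_parts

theorem integral_weighted_energy_sub (δ : ℝ) (ha : Continuous a) (hb : Continuous b)
    (hu : ContDiff ℝ 1 u) (hu_supp : HasCompactSupport u)
    (hv : ContDiff ℝ 1 v) (hv_supp : HasCompactSupport v)
    (hflux : ∀ x, HasDerivAt (fun y => b y * deriv u y) (a x * v x) x) :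
    ∫ x, (a x * (u x - δ * v x) ^ 2 - δ * (b x * (deriv u x - δ * deriv v x) ^ 2)) =
      (∫ x, (a x * u x ^ 2 + δ * (b x * deriv u x ^ 2))) +
        δ ^ 2 * (∫ x, (a x * v x ^ 2 + 2 * (b x * (deriv u x * deriv v x)))) -
        δ ^ 3 * ∫ x, b x * deriv v x ^ 2 := by
  have hu' := hu.continuous_deriv_one
  have hv' := hv.continuous_deriv_one
  have int_uu : Integrable fun x => a x * u x ^ 2 :=
    integrable_mul_sq_of_hasCompactSupport ha hu.continuous hu_supp
  have int_vv : Integrable fun x => a x * v x ^ 2 :=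
    integrable_mul_sq_of_hasCompactSupport ha hv.continuous hv_supp
  have int_vu : Integrable fun x => a x * (v x * u x) :=
    integrable_mul_mul_of_hasCompactSupport ha hv.continuous hu.continuous hu_supp
  have int_uu' : Integrable fun x => b x * deriv u x ^ 2 :=
    integrable_mul_sq_of_hasCompactSupport hb hu' hu_supp.deriv
  have int_vv' : Integrable fun x => b x * deriv v x ^ 2 :=
    integrable_mul_sq_of_hasCompactSupport hb hv' hv_supp.deriv
  have int_uv' : Integrable fun x => b x * (deriv u x * deriv v x) :=
    integrable_mul_mul_of_hasCompactSupport hb hu' hv' hv_supp.deriv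
  have by_parts : ∫ x, b x * deriv u x ^ 2 = -∫ x, a x * (v x * u x) := by
    simpa only [Pi.mul_apply, mul_assoc] using
      integral_mul_deriv_sq_eq_neg_integral_mul hb (ha.mul hv.continuous) hu hu_supp hflux
  have first_order_eq_zero : ∫ x, (a x * (v x * u x) + b x * deriv u x ^ 2) = 0 := by
    rw [integral_add int_vu int_uu', by_parts, add_neg_cancel]
  calc
    _ = ∫ x, ((a x * u x ^ 2 + δ * (b x * deriv u x ^ 2)) +
          δ ^ 2 * (a x * v x ^ 2 + 2 * (b x * (deriv u x * deriv v x))) -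
          δ ^ 3 * (b x * deriv v x ^ 2) -
          2 * δ * (a x * (v x * u x) + b x * deriv u x ^ 2)) := by
      congr with x
      ring
    _ = _ := by
      rw [integral_sub, integral_sub, integral_add]
      · simp only [integral_const_mul, first_order_eq_zero, mul_zero, sub_zero]
      all_goals fun_prop

end WeightedEnergy

/-- The dispersive correction `v = (η³ u')' / (3 η)` of the layer-averaged velocity `u` for the
layer thickness `η`; the canonical momentum is `ρ (u - ε² v)`. It takes the value `0` wherever
`η` vanishes. -/
noncomputable def dispersiveCorrection (η u : ℝ → ℝ) (x : ℝ) : ℝ :=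
  deriv (fun y => η y ^ 3 * deriv u y) x / (3 * η x)

section DispersiveCorrection

variable {η u : ℝ → ℝ}

theorem contDiff_pow_three_mul_deriv {n : WithTop ℕ∞} (hu : ContDiff ℝ (n + 1) u)
    (hη : ContDiff ℝ n η) : ContDiff ℝ n fun x => η x ^ 3 * deriv u x :=
  (hη.pow 3).mul hu.deriv'

theorem contDiff_dispersiveCorrection {n : WithTop ℕ∞} (hu : ContDiff ℝ (n + 1 + 1) u)
    (hη : ContDiff ℝ (n + 1) η) (hη_ne : ∀ x, η x ≠ 0) :
    ContDiff ℝ n (dispersiveCorrection η u) :=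
  (contDiff_pow_three_mul_deriv hu hη).deriv'.div
    (contDiff_const.mul (hη.of_le le_self_add)) fun x => mul_ne_zero three_ne_zero (hη_ne x)

theorem hasCompactSupport_dispersiveCorrection (hu_supp : HasCompactSupport u) :
    HasCompactSupport (dispersiveCorrection η u) := by
  have flux_supp : HasCompactSupport fun x => η x ^ 3 * deriv u x := hu_supp.deriv.mul_left
  exact flux_supp.deriv.mono fun x hx hx_flux =>
    hx (by rw [dispersiveCorrection, hx_flux, zero_div])

theorem hasDerivAt_pow_three_mul_deriv (hu : ContDiff ℝ 2 u) (hη : ContDiff ℝ 1 η) {x : ℝ}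
    (hηx : η x ≠ 0) :
    HasDerivAt (fun y => η y ^ 3 * deriv u y) (3 * η x * dispersiveCorrection η u x) x := by
  have flux_diff : Differentiable ℝ fun y => η y ^ 3 * deriv u y :=
    (contDiff_pow_three_mul_deriv (hu.of_le one_add_one_eq_two.le) hη).differentiable one_ne_zero
  rw [dispersiveCorrection, mul_div_cancel₀ _ (mul_ne_zero three_ne_zero hηx)]
  exact (flux_diff x).hasDerivAt

end DispersiveCorrection

theorem canonical_energy_equals_SGN_energy_general
    (ρ ε : ℝ) (hρ : ρ ≠ 0)
    (u : ℝ → ℝ) (hu : ContDiff ℝ 3 u) (husupp : HasCompactSupport u)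
    (η : ℝ → ℝ) (hη : ContDiff ℝ 2 η) (hη_ne : ∀ x, η x ≠ 0)
    (v : ℝ → ℝ) (hv : v = dispersiveCorrection η u)
    (μ : ℝ → ℝ) (hμ : μ = fun x => ρ * (u x - ε ^ 2 * v x)) :
    (∫ x, (1 / ρ) * (η x * μ x ^ 2 - (ε ^ 2 / 3) * η x ^ 3 * deriv μ x ^ 2)) =
      (∫ x, ρ * (η x * u x ^ 2 + (ε ^ 2 / 3) * η x ^ 3 * deriv u x ^ 2)) +
        ε ^ 4 * (∫ x, ρ * (η x * v x ^ 2 + (2 / 3) * η x ^ 3 * deriv u x * deriv v x)) -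
        (ε ^ 6 / 3) * ∫ x, ρ * η x ^ 3 * deriv v x ^ 2 := by
  have hu₁ : ContDiff ℝ 1 u := hu.of_le (by norm_num)
  have hv₁ : ContDiff ℝ 1 v :=
    hv ▸ contDiff_dispersiveCorrection (hu.of_le (by norm_num)) (hη.of_le (by norm_num)) hη_ne
  have hv_supp : HasCompactSupport v := hv ▸ hasCompactSupport_dispersiveCorrection husupp
  have hflux (x : ℝ) : HasDerivAt (fun y => η y ^ 3 * deriv u y) (3 * η x * v x) x :=
    hv ▸ hasDerivAt_pow_three_mul_deriv (hu.of_le (by norm_num)) (hη.of_le (by norm_num)) (hη_ne x)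
  have deriv_μ (x : ℝ) : deriv μ x = ρ * (deriv u x - ε ^ 2 * deriv v x) := by
    have hux := (hu₁.differentiable one_ne_zero x).hasDerivAt
    have hvx := (hv₁.differentiable one_ne_zero x).hasDerivAt
    exact hμ ▸ ((hux.sub (hvx.const_mul (ε ^ 2))).const_mul ρ).deriv
  have canonical_density (x : ℝ) :
      (1 / ρ) * (η x * μ x ^ 2 - (ε ^ 2 / 3) * η x ^ 3 * deriv μ x ^ 2) =
        ρ / 3 * (3 * η x * (u x - ε ^ 2 * v x) ^ 2 -
          ε ^ 2 * (η x ^ 3 * (deriv u x - ε ^ 2 * deriv v x) ^ 2)) := by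
    rw [deriv_μ, hμ]
    field_simp
  have SGN_density (x : ℝ) :
      ρ * (η x * u x ^ 2 + (ε ^ 2 / 3) * η x ^ 3 * deriv u x ^ 2) =
        ρ / 3 * (3 * η x * u x ^ 2 + ε ^ 2 * (η x ^ 3 * deriv u x ^ 2)) := by
    ring
  have second_order_density (x : ℝ) :
      ρ * (η x * v x ^ 2 + (2 / 3) * η x ^ 3 * deriv u x * deriv v x) =
        ρ / 3 * (3 * η x * v x ^ 2 + 2 * (η x ^ 3 * (deriv u x * deriv v x))) := by
    ring
  simp_rw [canonical_density, SGN_density, second_order_density, mul_assoc ρ, integral_const_mul]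
  rw [integral_weighted_energy_sub (a := fun x => 3 * η x) (b := fun x => η x ^ 3) (ε ^ 2)
    (continuous_const.mul hη.continuous) (hη.continuous.pow 3) hu₁ husupp hv₁ hv_supp hflux]
  ring

/-- The canonical water-wave Hamiltonian density, expressed through
`μ_ε = ρ(ū − ε²v)` with `v = (η³ū')'/(3η)`, coincides with the
Serre–Green–Naghdi energy up to explicit `O(ε⁴)` terms. -/
theorem canonical_energy_equals_SGN_energy
    (ρ ε : ℝ) (hρ : ρ ≠ 0)
    (u : ℝ → ℝ) (hu : ContDiff ℝ (⊤ : ℕ∞) u) (husupp : HasCompactSupport u)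
    (η : ℝ → ℝ) (hη : ContDiff ℝ (⊤ : ℕ∞) η) (hηpos : ∀ x, 0 < η x)
    (v : ℝ → ℝ)
    (hv : v = fun x => deriv (fun y => (η y)^3 * deriv u y) x / (3 * η x))
    (μ : ℝ → ℝ)
    (hμ : μ = fun x => ρ * (u x - ε^2 * v x)) :
    (∫ x : ℝ, (1/ρ) * (η x * (μ x)^2 - (ε^2/3) * (η x)^3 * (deriv μ x)^2))
    = (∫ x : ℝ, ρ * (η x * (u x)^2 + (ε^2/3) * (η x)^3 * (deriv u x)^2))
      + ε^4 * (∫ x : ℝ, ρ * (η x * (v x)^2 + (2/3) * (η x)^3 * deriv u x * deriv v x))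
      - (ε^6/3) * (∫ x : ℝ, ρ * (η x)^3 * (deriv v x)^2) :=
  canonical_energy_equals_SGN_energy_general ρ ε hρ u (contDiff_infty.1 hu 3) husupp
    η (contDiff_infty.1 hη 2) (fun x => (hηpos x).ne') v hv μ hμ
end
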